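/- Let G, Q be groups and ρ: G → Q a surjective group homomorphism. Then the diagonal subgroup Δ_G is a normal subgroup of G ×_Q G if and only if ker ρ ⊆ Z(G), the center of G. -/

import Mathlib

/-- The fibre product `G ×_Q G` of a surjective group homomorphism `ρ : G → Q`
with itself, as a subgroup of `G × G`. -/
def fiberProduct {G Q : Type*} [Group G] [Group Q] (ρ : G →* Q) : Subgroup (G × G) where
  carrier := {p | ρ p.1 = ρ p.2}
  one_mem' := rfl
  mul_mem' := by
    intro a b ha hb
    simp only [Set.mem_setOf_eq, Prod.fst_mul, Prod.snd_mul, map_mul] at *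
    rw [ha, hb]
  inv_mem' := by
    intro a ha
    simp only [Set.mem_setOf_eq, Prod.fst_inv, Prod.snd_inv, map_inv] at *
    rw [ha]

/-- The diagonal subgroup `Δ_G` of `G × G`. -/
def diagSubgroup (G : Type*) [Group G] : Subgroup (G × G) where
  carrier := {p | p.1 = p.2}
  one_mem' := rfl
  mul_mem' := by
    intro a b ha hb
    simp only [Set.mem_setOf_eq, Prod.fst_mul, Prod.snd_mul] at *
    rw [ha, hb]
  inv_mem' := by
    intro a ha
    simp only [Set.mem_setOf_eq, Prod.fst_inv, Prod.snd_inv] at *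
    rw [ha]

/-!
The normalizer of `Δ_G` in `G × G` is itself a fibre product: `(x, y)` normalizes `Δ_G` exactly when
`x` and `y` induce the same inner automorphism of `G`, so the normalizer is the fibre product of
`MulAut.conj : G →* MulAut G` with itself. Fibre products are ordered as the kernels of their
homomorphisms, and the kernel of `MulAut.conj` is the center.
-/

section FiberProduct

variable {G Q R : Type*} [Group G] [Group Q] [Group R]

theorem mem_fiberProduct {ρ : G →* Q} {p : G × G} : p ∈ fiberProduct ρ ↔ ρ p.1 = ρ p.2 :=
  Iff.rfl

theorem mem_diagSubgroup {p : G × G} : p ∈ diagSubgroup G ↔ p.1 = p.2 :=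
  Iff.rfl

theorem diagSubgroup_le_fiberProduct (ρ : G →* Q) : diagSubgroup G ≤ fiberProduct ρ :=
  fun _ hp ↦ congrArg ρ (mem_diagSubgroup.mp hp)

theorem fiberProduct_le_fiberProduct_iff {ρ : G →* Q} {σ : G →* R} :
    fiberProduct ρ ≤ fiberProduct σ ↔ ρ.ker ≤ σ.ker := by
  constructor
  · intro h k hk
    have hk_one : (k, 1) ∈ fiberProduct ρ := hk.trans ρ.map_one.symm
    exact (h hk_one).trans σ.map_one
  · intro h p hp
    rw [mem_fiberProduct, MonoidHom.eq_iff] at hp ⊢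
    exact h hp

end FiberProduct

section Normalizer

variable (G : Type*) [Group G]

theorem ker_conj_eq_center : (MulAut.conj : G →* MulAut G).ker = Subgroup.center G := by
  ext k
  simp only [MonoidHom.mem_ker, Subgroup.mem_center_iff, MulEquiv.ext_iff, MulAut.conj_apply,
    MulAut.one_apply, mul_inv_eq_iff_eq_mul, eq_comm (a := k * _)]

theorem normalizer_diagSubgroup :
    Subgroup.normalizer (diagSubgroup G : Set (G × G)) =
      fiberProduct (MulAut.conj : G →* MulAut G) := by
  ext ⟨x, y⟩
  rw [Subgroup.mem_normalizer_iff, mem_fiberProduct]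
  constructor
  · intro h
    ext g
    exact (h (g, g)).mp rfl
  · rintro hxy ⟨a, b⟩
    have conj_eq : x * b * x⁻¹ = y * b * y⁻¹ := DFunLike.congr_fun hxy b
    simp only [mem_diagSubgroup, Prod.fst_mul, Prod.snd_mul, Prod.fst_inv, Prod.snd_inv,
      ← conj_eq, mul_left_inj, mul_right_inj]

end Normalizer

theorem stmt10_general {G Q : Type*} [Group G] [Group Q] (ρ : G →* Q) :
    ((diagSubgroup G).subgroupOf (fiberProduct ρ)).Normal ↔
      ρ.ker ≤ Subgroup.center G := by
  rw [Subgroup.normal_subgroupOf_iff_le_normalizer (diagSubgroup_le_fiberProduct ρ),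
    normalizer_diagSubgroup, fiberProduct_le_fiberProduct_iff, ker_conj_eq_center]

/-- For a surjective group homomorphism `ρ : G → Q`, the diagonal
subgroup `Δ_G` is normal in `G ×_Q G` if and only if `ker ρ ⊆ Z(G)`. -/
theorem stmt10 {G Q : Type*} [Group G] [Group Q] (ρ : G →* Q)
    (hρ : Function.Surjective ρ) :
    ((diagSubgroup G).subgroupOf (fiberProduct ρ)).Normal ↔
      ρ.ker ≤ Subgroup.center G :=
  stmt10_general ρ
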